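/- Let d ≥ 1, β ∈ (0,2), and let f : ℝ^d → ℝ be smooth with suitable decay. Suppose Γ : [0,∞) → [0,∞) is a C² convex nondecreasing function with Γ(0) = 0. Then pointwise Λ^β(Γ ∘ f²)(x) ≤ Γ′(f(x)²) · Λ^β(f²)(x) whenever f² takes values in [0,∞), where Λ^β is the fractional Laplacian defined by the principal value integral Λ^β g(x) = c_{d,β} P.V. ∫_{ℝ^d} (g(x) − g(y)) / |x−y|^{d+β} dy with c_{d,β} > 0. -/

import Mathlib

open MeasureTheory Filter SchwartzMap

/-!
The kernel `‖z‖ ^ (-(d + β))` is even and integrates `min 1 (‖z‖ ^ 2)`, so pairing `z` with `-z`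
replaces the principal value by an absolutely convergent integral of the symmetrized increments
`(g x - g (x + z)) + (g x - g (x - z))`, which are `O(‖z‖ ^ 2)` when `g` is `C²` at `x`. For these
integrals the inequality holds pointwise in `z`: a convex `Γ` lies above its tangent at `h x`, that
is, `Γ (h x) - Γ (h y) ≤ Γ' (h x) * (h x - h y)`.
-/

open Set Topology Asymptotics Bornology Module

section SymmetrizedIncrement

variable {E F : Type*} [NormedAddCommGroup E] [NormedAddCommGroup F] [NormedSpace ℝ F]
  {g : E → F} {x : E}

/-- The second difference of `g` at `x`, with the sign convention of the fractional Laplacian: the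
sum of the increments `g x - g y` over the two points `y = x ± z`. -/
def symmIncrement (g : E → F) (x z : E) : F :=
  (g x - g (x + z)) + (g x - g (x - z))

theorem isBigO_sub_sub_fderiv_of_contDiffAt_two [NormedSpace ℝ E] (hg : ContDiffAt ℝ 2 g x) :
    (fun z => g (x + z) - g x - fderiv ℝ g x z) =O[𝓝 0] fun z => ‖z‖ ^ 2 := by
  obtain ⟨K, t, ht, hK⟩ :=
    (hg.fderiv_right (m := 1) (by norm_num)).exists_lipschitzOnWith
  have hdiff : ∀ᶠ y in 𝓝 x, DifferentiableAt ℝ g y :=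
    (hg.eventually (by simp)).mono fun y hy => hy.differentiableAt two_ne_zero
  obtain ⟨r, hr, hrt⟩ := Metric.eventually_nhds_iff_ball.1 (hdiff.and ht)
  refine IsBigO.of_bound K ?_
  filter_upwards [Metric.ball_mem_nhds 0 hr] with z hz
  have hball : Metric.closedBall x ‖z‖ ⊆ Metric.ball x r :=
    Metric.closedBall_subset_ball (mem_ball_zero_iff.1 hz)
  have hderiv : ∀ y ∈ Metric.closedBall x ‖z‖, ‖fderiv ℝ g y - fderiv ℝ g x‖ ≤ K * ‖z‖ := by
    intro y hy
    calc ‖fderiv ℝ g y - fderiv ℝ g x‖ ≤ K * ‖y - x‖ :=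
          hK.norm_sub_le (hrt y (hball hy)).2 (mem_of_mem_nhds ht)
      _ ≤ K * ‖z‖ := by gcongr; exact mem_closedBall_iff_norm.1 hy
  have hmv := (convex_closedBall x ‖z‖).norm_image_sub_le_of_norm_hasFDerivWithin_le'
    (fun y hy => (hrt y (hball hy)).1.hasFDerivAt.hasFDerivWithinAt) hderiv
    (Metric.mem_closedBall_self (norm_nonneg z)) (y := x + z) (by simp)
  simpa [mul_assoc, sq] using hmv

theorem symmIncrement_isBigO [NormedSpace ℝ E] (hg : ContDiffAt ℝ 2 g x) :
    symmIncrement g x =O[𝓝 0] fun z => ‖z‖ ^ 2 := by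
  have hpos := isBigO_sub_sub_fderiv_of_contDiffAt_two hg
  have hneg := hpos.comp_tendsto (k := Neg.neg) (l' := 𝓝 0) (by simpa using tendsto_neg (0 : E))
  refine (hpos.add (hneg.congr_right fun z => by simp)).neg_left.congr_left fun z => ?_
  simp only [symmIncrement, Function.comp_apply, map_neg, ← sub_eq_add_neg]
  abel

theorem exists_norm_symmIncrement_le [NormedSpace ℝ E] (hg : ContDiffAt ℝ 2 g x)
    (hbdd : IsBounded (range g)) :
    ∃ C, ∀ z, ‖symmIncrement g x z‖ ≤ C * min 1 (‖z‖ ^ 2) := by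
  obtain ⟨A, hA⟩ := (symmIncrement_isBigO hg).bound
  obtain ⟨r, hr, hnear⟩ := Metric.eventually_nhds_iff_ball.1 hA
  obtain ⟨M, hM⟩ := Metric.isBounded_range_iff.1 hbdd
  have hM0 : 0 ≤ M := dist_nonneg.trans (hM x x)
  set δ := min 1 r
  have hδ : 0 < δ := lt_min one_pos hr
  refine ⟨max A (2 * M / δ ^ 2), fun z => ?_⟩
  rcases lt_or_ge ‖z‖ δ with hz | hz
  · have hz1 : ‖z‖ ^ 2 ≤ 1 := pow_le_one₀ (norm_nonneg z) (hz.le.trans (min_le_left _ _))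
    calc ‖symmIncrement g x z‖ ≤ A * ‖z‖ ^ 2 := by
          simpa using hnear z (mem_ball_zero_iff.2 (hz.trans_le (min_le_right _ _)))
      _ ≤ max A (2 * M / δ ^ 2) * min 1 (‖z‖ ^ 2) := by
          rw [min_eq_right hz1]
          gcongr
          exact le_max_left _ _
  · have hδz : δ ^ 2 ≤ min 1 (‖z‖ ^ 2) :=
      le_min (pow_le_one₀ hδ.le (min_le_left _ _)) (by gcongr)
    calc ‖symmIncrement g x z‖ ≤ ‖g x - g (x + z)‖ + ‖g x - g (x - z)‖ := norm_add_le _ _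
      _ ≤ 2 * M := by
          rw [two_mul, ← dist_eq_norm, ← dist_eq_norm]
          exact add_le_add (hM _ _) (hM _ _)
      _ = 2 * M / δ ^ 2 * δ ^ 2 := by field_simp
      _ ≤ max A (2 * M / δ ^ 2) * min 1 (‖z‖ ^ 2) := by
          gcongr
          exact le_max_right _ _

end SymmetrizedIncrement

section LevyOperator

variable {E F : Type*} [NormedAddCommGroup E] [MeasurableSpace E] [NormedAddCommGroup F]
  {ν : Measure E} {g : E → F} {x : E}

/-- Lévy measures, the jump measures of Lévy processes: no mass at the origin, and `min 1 (‖z‖ ^ 2)`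
is integrable. -/
structure IsLevyMeasure (ν : Measure E) : Prop where
  measure_singleton_zero : ν {0} = 0
  integrable_min_one_norm_sq : Integrable (fun z => min 1 (‖z‖ ^ 2)) ν

theorem IsLevyMeasure.measure_lt_norm_lt_top (hν : IsLevyMeasure ν) {ε : ℝ} (hε : 0 < ε) :
    ν {z | ε < ‖z‖} < ⊤ := by
  refine (measure_mono fun z (hz : ε < ‖z‖) => ?_).trans_lt
    (hν.integrable_min_one_norm_sq.measure_ge_lt_top (ε := min 1 (ε ^ 2)) (by positivity))
  have hsq : ε ^ 2 ≤ ‖z‖ ^ 2 := by gcongr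
  exact min_le_min_left 1 hsq

variable [BorelSpace E]

theorem measurableSet_lt_norm (ε : ℝ) : MeasurableSet {z : E | ε < ‖z‖} :=
  measurableSet_lt measurable_const measurable_norm

theorem IsLevyMeasure.aecover_lt_norm (hν : IsLevyMeasure ν) :
    AECover ν (𝓝[>] 0) fun ε => {z : E | ε < ‖z‖} where
  ae_eventually_mem := by
    filter_upwards [compl_mem_ae_iff.2 hν.measure_singleton_zero] with z hz
    exact nhdsWithin_le_nhds (Iio_mem_nhds (norm_pos_iff.2 hz))
  measurableSet := measurableSet_lt_norm

theorem IsLevyMeasure.integrableOn_sub (hν : IsLevyMeasure ν) (hg : StronglyMeasurable g)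
    (hbdd : IsBounded (range g)) (x : E) {ε : ℝ} (hε : 0 < ε) :
    IntegrableOn (fun z => g x - g (x + z)) {z | ε < ‖z‖} ν := by
  obtain ⟨M, hM⟩ := Metric.isBounded_range_iff.1 hbdd
  refine Measure.integrableOn_of_bounded (M := M) (hν.measure_lt_norm_lt_top hε).ne ?_
    (Eventually.of_forall fun z => dist_eq_norm (g x) (g (x + z)) ▸ hM x (x + z))
  exact (stronglyMeasurable_const.sub
    (hg.comp_measurable (measurable_const_add x))).aestronglyMeasurable

variable [NormedSpace ℝ F]

/-- The operator `g ↦ P.V. ∫ (g x - g (x + z)) dν(z)` attached to a symmetric Lévy measure `ν`, in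
its absolutely convergent form. The principal value is recovered in
`IsLevyMeasure.tendsto_setIntegral_sub`. -/
noncomputable def levyOperator (ν : Measure E) (g : E → F) (x : E) : F :=
  (1 / 2 : ℝ) • ∫ z, symmIncrement g x z ∂ν

theorem IsLevyMeasure.integrable_symmIncrement [NormedSpace ℝ E] (hν : IsLevyMeasure ν)
    (hg : StronglyMeasurable g) (hbdd : IsBounded (range g)) (hgx : ContDiffAt ℝ 2 g x) :
    Integrable (symmIncrement g x) ν := by
  obtain ⟨C, hC⟩ := exists_norm_symmIncrement_le hgx hbdd
  refine (hν.integrable_min_one_norm_sq.const_mul C).mono' ?_ (Eventually.of_forall hC)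
  exact ((stronglyMeasurable_const.sub (hg.comp_measurable (measurable_const_add x))).add
    (stronglyMeasurable_const.sub
      (hg.comp_measurable (measurable_const_sub x)))).aestronglyMeasurable

theorem IsLevyMeasure.setIntegral_sub_eq_half_smul [ν.IsNegInvariant] (hν : IsLevyMeasure ν)
    (hg : StronglyMeasurable g) (hbdd : IsBounded (range g)) (x : E) {ε : ℝ} (hε : 0 < ε) :
    ∫ z in {z | ε < ‖z‖}, (g x - g (x + z)) ∂ν =
      (1 / 2 : ℝ) • ∫ z in {z | ε < ‖z‖}, symmIncrement g x z ∂ν := by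
  set T := {z : E | ε < ‖z‖}
  have hT : Neg.neg ⁻¹' T = T := by ext z; simp [T]
  have hint := hν.integrableOn_sub hg hbdd x hε
  have hreflect : ∫ z in T, (g x - g (x - z)) ∂ν = ∫ z in T, (g x - g (x + z)) ∂ν := by
    have := (Measure.measurePreserving_neg ν).setIntegral_preimage_emb
      (MeasurableEquiv.neg E).measurableEmbedding (fun z => g x - g (x + z)) T
    simpa only [hT, ← sub_eq_add_neg] using this
  have hint' : IntegrableOn (fun z => g x - g (x - z)) T ν := by
    have := hint.comp_neg
    simpa [← sub_eq_add_neg, T] using this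
  calc ∫ z in T, (g x - g (x + z)) ∂ν
      = (1 / 2 : ℝ) • (∫ z in T, (g x - g (x + z)) ∂ν + ∫ z in T, (g x - g (x - z)) ∂ν) := by
        rw [hreflect, ← two_smul ℝ, smul_smul]; norm_num
    _ = (1 / 2 : ℝ) • ∫ z in T, symmIncrement g x z ∂ν := by
        rw [← integral_add hint hint']; rfl

theorem IsLevyMeasure.tendsto_setIntegral_sub [NormedSpace ℝ E] [ν.IsNegInvariant]
    (hν : IsLevyMeasure ν) (hg : StronglyMeasurable g) (hbdd : IsBounded (range g))
    (hgx : ContDiffAt ℝ 2 g x) :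
    Tendsto (fun ε => ∫ z in {z | ε < ‖z‖}, (g x - g (x + z)) ∂ν) (𝓝[>] 0)
      (𝓝 (levyOperator ν g x)) := by
  have hlim := hν.aecover_lt_norm.integral_tendsto_of_countably_generated
    (hν.integrable_symmIncrement hg hbdd hgx)
  refine (hlim.const_smul (1 / 2 : ℝ)).congr' ?_
  filter_upwards [self_mem_nhdsWithin] with ε hε
  exact (hν.setIntegral_sub_eq_half_smul hg hbdd x hε).symm

end LevyOperator

section Convexity

theorem sub_le_deriv_mul_sub_of_convexOn {S : Set ℝ} {Γ : ℝ → ℝ} {a b : ℝ} (hΓ : ConvexOn ℝ S Γ)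
    (ha : a ∈ S) (hb : b ∈ S) (hΓa : DifferentiableAt ℝ Γ a) :
    Γ a - Γ b ≤ deriv Γ a * (a - b) := by
  rcases lt_trichotomy a b with hab | rfl | hba
  · have := hΓ.deriv_le_slope ha hb hab hΓa
    rw [slope_def_field, le_div_iff₀ (sub_pos.2 hab)] at this
    linarith
  · simp
  · have := hΓ.slope_le_deriv hb ha hba hΓa
    rwa [slope_def_field, div_le_iff₀ (sub_pos.2 hba)] at this

variable {E : Type*} [NormedAddCommGroup E] {S : Set ℝ} {Γ : ℝ → ℝ} {h : E → ℝ} {x : E}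

theorem symmIncrement_comp_le (hΓ : ConvexOn ℝ S Γ) (hS : ∀ y, h y ∈ S)
    (hΓx : DifferentiableAt ℝ Γ (h x)) (z : E) :
    symmIncrement (Γ ∘ h) x z ≤ deriv Γ (h x) * symmIncrement h x z := by
  rw [symmIncrement, symmIncrement, mul_add]
  exact add_le_add (sub_le_deriv_mul_sub_of_convexOn hΓ (hS _) (hS _) hΓx)
    (sub_le_deriv_mul_sub_of_convexOn hΓ (hS _) (hS _) hΓx)

theorem levyOperator_comp_le [MeasurableSpace E] {ν : Measure E} (hΓ : ConvexOn ℝ S Γ)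
    (hS : ∀ y, h y ∈ S) (hΓx : DifferentiableAt ℝ Γ (h x)) (hh : Integrable (symmIncrement h x) ν)
    (hΓh : Integrable (symmIncrement (Γ ∘ h) x) ν) :
    levyOperator ν (Γ ∘ h) x ≤ deriv Γ (h x) * levyOperator ν h x := by
  simp only [levyOperator, smul_eq_mul, mul_left_comm _ (1 / 2 : ℝ),
    ← integral_const_mul (deriv _ _)]
  gcongr
  · exact hh.const_mul _
  · exact symmIncrement_comp_le hΓ hS hΓx

end Convexity

section FractionalLaplacian

theorem integrableOn_Ioi_min_one_sq_mul_rpow {β : ℝ} (hβ : 0 < β) (hβ2 : β < 2) :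
    IntegrableOn (fun t : ℝ => min 1 (t ^ 2) * t ^ (-1 - β)) (Ioi 0) := by
  rw [← Ioo_union_Ici_eq_Ioi one_pos, integrableOn_union]
  constructor
  · refine ((intervalIntegral.integrableOn_Ioo_rpow_iff one_pos (s := 1 - β)).2
      (by linarith)).congr_fun (fun t ⟨ht0, ht1⟩ => ?_) measurableSet_Ioo
    beta_reduce
    rw [min_eq_right (pow_le_one₀ ht0.le ht1.le), ← Real.rpow_natCast, ← Real.rpow_add ht0]
    ring_nf
  · rw [integrableOn_Ici_iff_integrableOn_Ioi]
    refine (integrableOn_Ioi_rpow_of_lt (a := -1 - β) (by linarith) one_pos).congr_fun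
      (fun t (ht : 1 < t) => ?_) measurableSet_Ioi
    beta_reduce
    rw [min_eq_left (one_le_pow₀ ht.le), one_mul]

variable {E : Type*} [NormedAddCommGroup E] [NormedSpace ℝ E] [MeasurableSpace E]

/-- The Lévy measure of the fractional Laplacian of order `β`, up to the constant `c_{d,β}`: density
`‖z‖ ^ (-(d + β))` with respect to the Haar measure `μ`, where `d` is the dimension of the space. -/
noncomputable def fractionalLevyMeasure (μ : Measure E) (β : ℝ) : Measure E :=
  μ.withDensity fun z => ENNReal.ofReal (‖z‖ ^ ((finrank ℝ E : ℝ) + β))⁻¹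

variable [BorelSpace E] (μ : Measure E) {β : ℝ}

instance instIsNegInvariantFractionalLevyMeasure [μ.IsNegInvariant] :
    (fractionalLevyMeasure μ β).IsNegInvariant where
  neg_eq_self := by
    ext s hs
    rw [Measure.neg_apply, fractionalLevyMeasure, withDensity_apply _ hs,
      withDensity_apply _ hs.neg,
      ← (Measure.measurePreserving_neg μ).setLIntegral_comp_preimage hs (by fun_prop)]
    simp

theorem setIntegral_div_dist_rpow_eq [μ.IsAddLeftInvariant] (g : E → ℝ) (x : E) (ε : ℝ) :
    ∫ y in {y | ε < dist x y}, (g x - g y) / dist x y ^ ((finrank ℝ E : ℝ) + β) ∂μ =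
      ∫ z in {z | ε < ‖z‖}, (g x - g (x + z)) ∂fractionalLevyMeasure μ β := by
  have htranslate : (x + ·) ⁻¹' {y : E | ε < dist x y} = {z | ε < ‖z‖} := by ext z; simp
  rw [fractionalLevyMeasure, setIntegral_withDensity_eq_setIntegral_toReal_smul (by fun_prop)
    (Eventually.of_forall fun _ => ENNReal.ofReal_lt_top) _ (measurableSet_lt_norm ε),
    ← (measurePreserving_add_left μ x).setIntegral_preimage_emb (measurableEmbedding_addLeft x),
    htranslate]
  refine integral_congr_ae (Eventually.of_forall fun z => ?_)
  simp only [dist_self_add_right, smul_eq_mul]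
  rw [ENNReal.toReal_ofReal (by positivity), div_eq_inv_mul]

variable [FiniteDimensional ℝ E]

theorem integrable_min_one_norm_sq_mul_inv_norm_rpow [Nontrivial E] [μ.IsAddHaarMeasure]
    (hβ : 0 < β) (hβ2 : β < 2) :
    Integrable (fun z : E => (‖z‖ ^ ((finrank ℝ E : ℝ) + β))⁻¹ * min 1 (‖z‖ ^ 2)) μ := by
  refine (integrable_fun_norm_addHaar μ
    (f := fun t => (t ^ ((finrank ℝ E : ℝ) + β))⁻¹ * min 1 (t ^ 2))).2 ?_
  refine (integrableOn_Ioi_min_one_sq_mul_rpow hβ hβ2).congr_fun (fun t (ht : 0 < t) => ?_)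
    measurableSet_Ioi
  have hexp : t ^ (-1 - β) = t ^ (finrank ℝ E - 1) * (t ^ ((finrank ℝ E : ℝ) + β))⁻¹ := by
    rw [← Real.rpow_natCast, Nat.cast_pred finrank_pos, ← Real.rpow_neg ht.le, ← Real.rpow_add ht]
    ring_nf
  simp only [smul_eq_mul, hexp]
  ring

theorem isLevyMeasure_fractionalLevyMeasure [Nontrivial E] [μ.IsAddHaarMeasure]
    (hβ : 0 < β) (hβ2 : β < 2) : IsLevyMeasure (fractionalLevyMeasure μ β) where
  measure_singleton_zero := withDensity_absolutelyContinuous _ _ (measure_singleton 0)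
  integrable_min_one_norm_sq := by
    rw [fractionalLevyMeasure, integrable_withDensity_iff_integrable_smul' (by fun_prop)
      (Eventually.of_forall fun _ => ENNReal.ofReal_lt_top)]
    refine (integrable_min_one_norm_sq_mul_inv_norm_rpow μ hβ hβ2).congr
      (Eventually.of_forall fun z => ?_)
    simp only [smul_eq_mul]
    rw [ENNReal.toReal_ofReal (by positivity)]

theorem tendsto_setIntegral_div_dist_rpow [Nontrivial E] [μ.IsAddHaarMeasure] (hβ : 0 < β)
    (hβ2 : β < 2) {g : E → ℝ} {x : E} (hg : StronglyMeasurable g) (hbdd : IsBounded (range g))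
    (hgx : ContDiffAt ℝ 2 g x) :
    Tendsto (fun ε => ∫ y in {y | ε < dist x y},
        (g x - g y) / dist x y ^ ((finrank ℝ E : ℝ) + β) ∂μ) (𝓝[>] 0)
      (𝓝 (levyOperator (fractionalLevyMeasure μ β) g x)) := by
  simp_rw [setIntegral_div_dist_rpow_eq]
  exact (isLevyMeasure_fractionalLevyMeasure μ hβ hβ2).tendsto_setIntegral_sub hg hbdd hgx

theorem cordoba_cordoba_general [Nontrivial E] [μ.IsAddHaarMeasure] (hβ : 0 < β) (hβ2 : β < 2)
    {c : ℝ} (hc : 0 ≤ c) {S : Set ℝ} {Γ : ℝ → ℝ} {h : E → ℝ} {x : E}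
    (hΓconv : ConvexOn ℝ S Γ) (hS : ∀ y, h y ∈ S) (hΓ : Continuous Γ)
    (hΓx : ContDiffAt ℝ 2 Γ (h x)) (hh : StronglyMeasurable h) (hbdd : IsBounded (range h))
    (hhx : ContDiffAt ℝ 2 h x) :
    ∃ Lh LΓ : ℝ,
      Tendsto (fun ε : ℝ => c * ∫ y in {y | ε < dist x y},
        (h x - h y) / dist x y ^ ((finrank ℝ E : ℝ) + β) ∂μ) (𝓝[>] 0) (𝓝 Lh) ∧
      Tendsto (fun ε : ℝ => c * ∫ y in {y | ε < dist x y},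
        (Γ (h x) - Γ (h y)) / dist x y ^ ((finrank ℝ E : ℝ) + β) ∂μ) (𝓝[>] 0) (𝓝 LΓ) ∧
      LΓ ≤ deriv Γ (h x) * Lh := by
  set ν := fractionalLevyMeasure μ β
  have hν : IsLevyMeasure ν := isLevyMeasure_fractionalLevyMeasure μ hβ hβ2
  have hΓh : StronglyMeasurable (Γ ∘ h) := hΓ.comp_stronglyMeasurable hh
  have hΓbdd : IsBounded (range (Γ ∘ h)) :=
    (hbdd.isCompact_closure.image hΓ).isBounded.subset
      (range_comp Γ h ▸ image_mono subset_closure)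
  have hΓhx : ContDiffAt ℝ 2 (Γ ∘ h) x := hΓx.comp x hhx
  refine ⟨c * levyOperator ν h x, c * levyOperator ν (Γ ∘ h) x, ?_, ?_, ?_⟩
  · exact (tendsto_setIntegral_div_dist_rpow μ hβ hβ2 hh hbdd hhx).const_mul c
  · exact (tendsto_setIntegral_div_dist_rpow μ hβ hβ2 hΓh hΓbdd hΓhx).const_mul c
  · rw [mul_left_comm]
    gcongr
    exact levyOperator_comp_le hΓconv hS (hΓx.differentiableAt two_ne_zero)
      (hν.integrable_symmIncrement hh hbdd hhx)
      (hν.integrable_symmIncrement hΓh hΓbdd hΓhx)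

end FractionalLaplacian

theorem isBounded_range_schwartzMap_sq {V : Type*} [NormedAddCommGroup V] [NormedSpace ℝ V]
    (f : 𝓢(V, ℝ)) : IsBounded (range fun y => f y ^ 2) := by
  refine isBounded_iff_forall_norm_le.2
    ⟨SchwartzMap.seminorm ℝ 0 0 f ^ 2, forall_mem_range.2 fun y => ?_⟩
  rw [norm_pow]
  gcongr
  exact f.norm_le_seminorm ℝ y

/-- Córdoba–Córdoba convexity inequality for the fractional Laplacian
`Λ^β g(x) = c P.V. ∫ (g(x) − g(y))/|x−y|^{d+β} dy`: for Schwartz `f`, `h = f²`, and a `C²`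
convex nondecreasing `Γ : [0,∞) → [0,∞)` with `Γ(0) = 0`, the principal values
`Λ^β h(x)` and `Λ^β (Γ∘h)(x)` exist and `Λ^β(Γ∘h)(x) ≤ Γ′(h(x)) Λ^β h(x)` pointwise. -/
theorem cordoba_cordoba (d : ℕ) (hd : 1 ≤ d) (β : ℝ) (hβ : 0 < β) (hβ2 : β < 2)
    (c : ℝ) (hc : 0 < c)
    (f : 𝓢(EuclideanSpace ℝ (Fin d), ℝ))
    (Γ : ℝ → ℝ) (hΓsm : ContDiff ℝ 2 Γ) (hΓ0 : Γ 0 = 0)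
    (hΓconv : ConvexOn ℝ (Set.Ici 0) Γ) (hΓmono : MonotoneOn Γ (Set.Ici 0))
    (hΓnn : ∀ t : ℝ, 0 ≤ t → 0 ≤ Γ t)
    (x : EuclideanSpace ℝ (Fin d)) :
    ∃ Lh LΓ : ℝ,
      Tendsto (fun ε : ℝ =>
          c * ∫ y in {y : EuclideanSpace ℝ (Fin d) | ε < dist x y},
            ((f x) ^ 2 - (f y) ^ 2) / dist x y ^ ((d : ℝ) + β))
        (nhdsWithin 0 (Set.Ioi 0)) (nhds Lh) ∧
      Tendsto (fun ε : ℝ =>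
          c * ∫ y in {y : EuclideanSpace ℝ (Fin d) | ε < dist x y},
            (Γ ((f x) ^ 2) - Γ ((f y) ^ 2)) / dist x y ^ ((d : ℝ) + β))
        (nhdsWithin 0 (Set.Ioi 0)) (nhds LΓ) ∧
      LΓ ≤ deriv Γ ((f x) ^ 2) * Lh := by
  have : Nonempty (Fin d) := ⟨⟨0, hd⟩⟩
  simpa only [finrank_euclideanSpace_fin] using
    cordoba_cordoba_general volume hβ hβ2 hc.le hΓconv (fun y => sq_nonneg (f y)) hΓsm.continuous
      hΓsm.contDiffAt (f.continuous.pow 2).stronglyMeasurable (isBounded_range_schwartzMap_sq f)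
      ((f.smooth 2).pow 2).contDiffAt (x := x)
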